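/- (Minimum principle) Let u be a solution of the time-fractional diffusion equation (D_t^α u)(x,t) = ∑_{j=1}^n ∂/∂x_j(p(x) ∂u/∂x_j(x,t)) − q(x)u(x,t) + F(x,t) in Ω_T = G×(0,T), and assume F(x,t) ≥ 0 for all (x,t) ∈ Ω_T. Then for every (x,t) ∈ Ḡ×[0,T] one has u(x,t) ≥ min{0, min_{(y,s) ∈ S_G^T} u(y,s)}, where S_G^T = (Ḡ×{0}) ∪ (S×[0,T]) is the parabolic boundary. -/

import Mathlib

open MeasureTheory Set Filter Topology

/-- The Caputo fractional derivative of order `α` of `f` at `t`: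
`(D^α f)(t) = (1/Γ(1−α)) ∫₀ᵗ (t−s)^{−α} f'(s) ds`. -/
noncomputable def caputo (α : ℝ) (f : ℝ → ℝ) (t : ℝ) : ℝ :=
  (1 / Real.Gamma (1 - α)) * ∫ s in (0:ℝ)..t, (t - s) ^ (-α) * deriv f s

/-- The elliptic part `div(p(x) grad w)(x) = ∑_j ∂/∂x_j (p(x) ∂w/∂x_j)(x)`. -/
noncomputable def divPGrad (n : ℕ) (p : (Fin n → ℝ) → ℝ) (w : (Fin n → ℝ) → ℝ)
    (x : Fin n → ℝ) : ℝ :=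
  ∑ j : Fin n, fderiv ℝ (fun y => p y * fderiv ℝ w y (Pi.single j 1)) x (Pi.single j 1)

/-- `u` is a (classical) solution of the time-fractional diffusion equation
`(D_t^α u)(x,t) = div(p grad u) − q u + F` in `Ω_T = G × (0,T)`:
`u ∈ C(Ḡ×[0,T])`, twice continuously differentiable in `x` on `G`, for each `x ∈ G`
the map `t ↦ u(x,t)` is `C¹` on `(0,T]` with integrable derivative, and the equation
holds pointwise in `Ω_T`. -/
def IsSolutionTFDE (n : ℕ) (α T : ℝ) (G : Set (Fin n → ℝ))
    (p q : (Fin n → ℝ) → ℝ) (F : (Fin n → ℝ) → ℝ → ℝ)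
    (u : (Fin n → ℝ) → ℝ → ℝ) : Prop :=
  ContinuousOn (fun z : (Fin n → ℝ) × ℝ => u z.1 z.2) (closure G ×ˢ Set.Icc 0 T) ∧
  (∀ t ∈ Set.Ioo (0:ℝ) T, ContDiffOn ℝ 2 (fun x => u x t) G) ∧
  (∀ x ∈ G, ContDiffOn ℝ 1 (u x) (Set.Ioc 0 T) ∧
    IntervalIntegrable (deriv (u x)) MeasureTheory.volume 0 T) ∧
  (∀ x ∈ G, ∀ t ∈ Set.Ioo (0:ℝ) T,
    caputo α (u x) t = divPGrad n p (fun y => u y t) x - q x * u x t + F x t)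

/-!
If `u` fell below `m = min 0 (min u)` (the inner minimum over the parabolic boundary) at a time
`t < T`, its minimum over `Ḡ × [0, t]` would be attained at some `(x₁, t₁)` with `x₁ ∈ G` and
`0 < t₁ < T`. At that point `div (p grad u) ≥ 0` and `-q u ≥ 0`, so the equation gives
`D_t^α u ≥ 0`. On the other hand, writing `D^α` in terms of `f - f t₁ ≥ 0` and integrating by parts
against the increasing kernel `(t₁ - s)^(-α)` shows
`D^α f t₁ ≤ t₁^(-α) / Γ(1 - α) * (f t₁ - f 0)` for any `f` minimal at `t₁` over `[0, t₁]`; hence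
`u x₁ 0 ≤ u x₁ t₁ < m`, a contradiction. The time `t = T` follows by continuity.
-/

theorem deriv_deriv_nonneg_of_isLocalMin {g : ℝ → ℝ} {x : ℝ} (hmin : IsLocalMin g x)
    (hg : ContinuousAt g x) : 0 ≤ deriv (deriv g) x := by
  by_contra! hneg
  have hmax : IsLocalMax g x := isLocalMax_of_deriv_deriv_neg hneg hmin.deriv_eq_zero hg
  have hconst : g =ᶠ[𝓝 x] fun _ ↦ g x := by
    filter_upwards [hmin, hmax] with y hle hge using le_antisymm hge hle
  have hzero : deriv (deriv g) x = 0 := by simpa using hconst.deriv.deriv_eq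
  exact hneg.ne hzero

section SecondDerivative

variable {𝕜 E F : Type*} [NontriviallyNormedField 𝕜] [NormedAddCommGroup E] [NormedSpace 𝕜 E]
  [NormedAddCommGroup F] [NormedSpace 𝕜 F]

theorem differentiableAt_fderiv_apply {w : E → F} {x : E} (hw : ContDiffAt 𝕜 2 w x) (e : E) :
    DifferentiableAt 𝕜 (fun y ↦ fderiv 𝕜 w y e) x :=
  ((hw.fderiv_right (m := 1) (by norm_num)).differentiableAt one_ne_zero).clm_apply
    (differentiableAt_const e)

theorem deriv_deriv_comp_add_smul {w : E → F} {x : E} (hw : ContDiffAt 𝕜 2 w x) (e : E) :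
    deriv (deriv fun s : 𝕜 ↦ w (x + s • e)) 0 = fderiv 𝕜 (fun y ↦ fderiv 𝕜 w y e) x e := by
  have hline (s : 𝕜) : HasDerivAt (fun s : 𝕜 ↦ x + s • e) e s := by
    simpa using ((hasDerivAt_id s).smul_const e).const_add x
  have htendsto : Tendsto (fun s : 𝕜 ↦ x + s • e) (𝓝 0) (𝓝 x) := by
    simpa using (hline 0).continuousAt.tendsto
  have hdiff : ∀ᶠ y in 𝓝 x, DifferentiableAt 𝕜 w y :=
    (hw.eventually (by simp)).mono fun y hy ↦ hy.differentiableAt two_ne_zero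
  have hfirst : deriv (fun s : 𝕜 ↦ w (x + s • e)) =ᶠ[𝓝 0] fun s ↦ fderiv 𝕜 w (x + s • e) e := by
    filter_upwards [htendsto.eventually hdiff] with s hs
    exact (hs.hasFDerivAt.comp_hasDerivAt s (hline s)).deriv
  rw [hfirst.deriv_eq, ← (differentiableAt_fderiv_apply hw e).lineDeriv_eq_fderiv, lineDeriv]

end SecondDerivative

theorem fderiv_fderiv_apply_nonneg_of_isLocalMin {E : Type*} [NormedAddCommGroup E]
    [NormedSpace ℝ E] {w : E → ℝ} {x : E} (hw : ContDiffAt ℝ 2 w x) (hmin : IsLocalMin w x)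
    (e : E) : 0 ≤ fderiv ℝ (fun y ↦ fderiv ℝ w y e) x e := by
  have hline : ContinuousAt (fun s : ℝ ↦ x + s • e) 0 := by fun_prop
  have hx : x + (0 : ℝ) • e = x := by simp
  rw [← deriv_deriv_comp_add_smul hw e]
  refine deriv_deriv_nonneg_of_isLocalMin ?_ ?_
  · have hmin' : IsLocalMin w (x + (0 : ℝ) • e) := by rwa [hx]
    exact hmin'.comp_tendsto (g := fun s : ℝ ↦ x + s • e) hline
  · exact hw.continuousAt.comp_of_eq hline hx

theorem divPGrad_nonneg_of_isLocalMin {n : ℕ} {p w : (Fin n → ℝ) → ℝ} {x : Fin n → ℝ}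
    (hp : DifferentiableAt ℝ p x) (hp0 : 0 ≤ p x) (hw : ContDiffAt ℝ 2 w x)
    (hmin : IsLocalMin w x) : 0 ≤ divPGrad n p w x := by
  refine Finset.sum_nonneg fun j _ ↦ ?_
  set e : Fin n → ℝ := Pi.single j 1
  have hgrad : fderiv ℝ w x e = 0 := by simp [hmin.fderiv_eq_zero]
  rw [fderiv_fun_mul hp (differentiableAt_fderiv_apply hw e), hgrad]
  simpa using mul_nonneg hp0 (fderiv_fderiv_apply_nonneg_of_isLocalMin hw hmin e)

section CaputoKernel

theorem hasDerivAt_sub_rpow_neg {s t : ℝ} (α : ℝ) (hst : s ≠ t) :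
    HasDerivAt (fun r ↦ (t - r) ^ (-α)) (α * (t - s) ^ (-α - 1)) s := by
  simpa using ((hasDerivAt_id' s).const_sub t).rpow_const (p := -α)
    (Or.inl (sub_ne_zero.2 hst.symm))

theorem continuousOn_sub_rpow {S : Set ℝ} {t : ℝ} (r : ℝ) (ht : t ∉ S) :
    ContinuousOn (fun s ↦ (t - s) ^ r) S :=
  ContinuousOn.rpow_const (by fun_prop) fun _ hs ↦
    Or.inl (sub_ne_zero.2 (ne_of_mem_of_not_mem hs ht).symm)

theorem intervalIntegrable_sub_rpow_mul {a t r : ℝ} {g : ℝ → ℝ} (hr : -1 < r) (hat : a < t)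
    (hg : IntervalIntegrable g volume a t) (hgc : ContinuousOn g (Ioc a t)) :
    IntervalIntegrable (fun s ↦ (t - s) ^ r * g s) volume a t := by
  obtain ⟨b, hab, hbt⟩ := exists_between hat
  have hbat : b ∈ uIcc a t := mem_uIcc_of_le hab.le hbt.le
  refine IntervalIntegrable.trans (b := b) ?_ ?_
  · refine (hg.mono_set (uIcc_subset_uIcc_left hbat)).continuousOn_mul
      (continuousOn_sub_rpow r ?_)
    exact notMem_uIcc_of_gt hat hbt
  · have hkernel : IntervalIntegrable (fun s ↦ (t - s) ^ r) volume b t := by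
      simpa using
        (intervalIntegral.intervalIntegrable_rpow' (a := t - b) (b := 0) hr).comp_sub_left t
    refine hkernel.mul_continuousOn (hgc.mono ?_)
    rw [uIcc_of_le hbt.le]
    exact Icc_subset_Ioc_left hab

theorem integral_mul_deriv_le_of_nonneg {k k' g g' : ℝ → ℝ} {a b : ℝ} (hab : a ≤ b)
    (hk : ContinuousOn k (Icc a b)) (hg : ContinuousOn g (Icc a b))
    (hkk' : ∀ s ∈ Ioo a b, HasDerivAt k (k' s) s) (hgg' : ∀ s ∈ Ioo a b, HasDerivAt g (g' s) s)
    (hk' : IntervalIntegrable k' volume a b) (hg' : IntervalIntegrable g' volume a b)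
    (hk'0 : ∀ s ∈ Icc a b, 0 ≤ k' s) (hg0 : ∀ s ∈ Icc a b, 0 ≤ g s) :
    ∫ s in a..b, k s * g' s ≤ k b * g b - k a * g a := by
  rw [intervalIntegral.integral_mul_deriv_eq_deriv_mul_of_hasDerivAt
    (by rwa [uIcc_of_le hab]) (by rwa [uIcc_of_le hab])
    (by rwa [min_eq_left hab, max_eq_right hab]) (by rwa [min_eq_left hab, max_eq_right hab])
    hk' hg']
  exact sub_le_self _ <|
    intervalIntegral.integral_nonneg hab fun s hs ↦ mul_nonneg (hk'0 s hs) (hg0 s hs)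

theorem integral_sub_rpow_neg_mul_deriv_le {α a b c t : ℝ} {f : ℝ → ℝ} (hα : 0 ≤ α)
    (hab : a ≤ b) (hbt : b < t) (hf : ContinuousOn f (Icc a b))
    (hfd : ∀ s ∈ Ioo a b, DifferentiableAt ℝ f s)
    (hfi : IntervalIntegrable (deriv f) volume a b) (hc : ∀ s ∈ Icc a b, c ≤ f s) :
    ∫ s in a..b, (t - s) ^ (-α) * deriv f s ≤
      (t - b) ^ (-α) * (f b - c) - (t - a) ^ (-α) * (f a - c) := by
  have ht : t ∉ Icc a b := notMem_Icc_of_gt hbt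
  refine integral_mul_deriv_le_of_nonneg (k' := fun s ↦ α * (t - s) ^ (-α - 1)) hab
    (continuousOn_sub_rpow _ ht) (hf.sub continuousOn_const)
    (fun s hs ↦ hasDerivAt_sub_rpow_neg α (hs.2.trans hbt).ne)
    (fun s hs ↦ (hfd s hs).hasDerivAt.sub_const c) ?_ hfi
    (fun s hs ↦ mul_nonneg hα (Real.rpow_nonneg (sub_nonneg.2 (hs.2.trans hbt.le)) _))
    (fun s hs ↦ sub_nonneg.2 (hc s hs))
  exact (continuousOn_const.mul (continuousOn_sub_rpow _ ht)).intervalIntegrable_of_Icc hab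

theorem tendsto_sub_rpow_neg_mul_sub {α t : ℝ} {f : ℝ → ℝ} (hα : α < 1)
    (hf : DifferentiableWithinAt ℝ f (Iio t) t) :
    Tendsto (fun s ↦ (t - s) ^ (-α) * (f s - f t)) (𝓝[<] t) (𝓝 0) := by
  have hslope : Tendsto (slope f t) (𝓝[<] t) (𝓝 (derivWithin f (Iio t) t)) :=
    (hasDerivWithinAt_iff_tendsto_slope' self_notMem_Iio).1 hf.hasDerivWithinAt
  have hpow : Tendsto (fun s ↦ (t - s) ^ (1 - α)) (𝓝[<] t) (𝓝 0) := by
    have hcont : Continuous fun s ↦ (t - s) ^ (1 - α) :=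
      Continuous.rpow_const (by fun_prop) fun _ ↦ Or.inr (sub_pos.2 hα).le
    simpa [Real.zero_rpow (sub_pos.2 hα).ne'] using (hcont.tendsto t).mono_left nhdsWithin_le_nhds
  have hprod : Tendsto (fun s ↦ -((t - s) ^ (1 - α) * slope f t s)) (𝓝[<] t) (𝓝 0) := by
    simpa using (hpow.mul hslope).neg
  refine hprod.congr' ?_
  filter_upwards [self_mem_nhdsWithin] with s (hs : s < t)
  rw [slope_def_field, sub_eq_add_neg 1 α, Real.rpow_add (sub_pos.2 hs), Real.rpow_one]
  field_simp [(sub_neg.2 hs).ne]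
  ring

end CaputoKernel

section CaputoMinimum

variable {α t : ℝ} {f : ℝ → ℝ}

theorem intervalIntegrable_sub_rpow_neg_mul_deriv (hα : α < 1) (ht : 0 < t)
    (hf : ContDiffOn ℝ 1 f (Ioc 0 t)) (hfi : IntervalIntegrable (deriv f) volume 0 t) :
    IntervalIntegrable (fun s ↦ (t - s) ^ (-α) * deriv f s) volume 0 t := by
  -- `f` need not be differentiable at `t`, so `deriv f t` may be a junk value.
  have hderiv : EqOn (deriv f) (derivWithin f (Ioc 0 t)) (uIoo 0 t) := fun s hs ↦ by
    rw [uIoo_of_le ht.le] at hs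
    exact (derivWithin_of_mem_nhds (Ioc_mem_nhds hs.1 hs.2)).symm
  refine (intervalIntegrable_sub_rpow_mul (neg_lt_neg hα) ht (hfi.congr_uIoo hderiv)
    (hf.continuousOn_derivWithin (uniqueDiffOn_Ioc 0 t) le_rfl)).congr_uIoo fun s hs ↦ ?_
  rw [hderiv hs]

theorem caputo_le_of_isMinOn (hα : 0 ≤ α) (hα1 : α < 1) (ht : 0 < t)
    (hfc : ContinuousOn f (Icc 0 t)) (hf : ContDiffOn ℝ 1 f (Ioc 0 t))
    (hfi : IntervalIntegrable (deriv f) volume 0 t) (hmin : IsMinOn f (Icc 0 t) t) :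
    caputo α f t ≤ t ^ (-α) / Real.Gamma (1 - α) * (f t - f 0) := by
  have hdiff : DifferentiableOn ℝ f (Ioc 0 t) := hf.differentiableOn one_ne_zero
  have hbound : ∀ b ∈ Ioo 0 t, ∫ s in (0 : ℝ)..b, (t - s) ^ (-α) * deriv f s ≤
      (t - b) ^ (-α) * (f b - f t) - t ^ (-α) * (f 0 - f t) := fun b hb ↦ by
    simpa using integral_sub_rpow_neg_mul_deriv_le hα hb.1.le hb.2
      (hfc.mono (Icc_subset_Icc_right hb.2.le))
      (fun s hs ↦ hdiff.differentiableAt (Ioc_mem_nhds hs.1 (hs.2.trans hb.2)))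
      (hfi.mono_set (uIcc_subset_uIcc_left (mem_uIcc_of_le hb.1.le hb.2.le)))
      (fun s hs ↦ hmin ⟨hs.1, hs.2.trans hb.2.le⟩)
  have hintegral : Tendsto (fun b ↦ ∫ s in (0 : ℝ)..b, (t - s) ^ (-α) * deriv f s) (𝓝[<] t)
      (𝓝 (∫ s in (0 : ℝ)..t, (t - s) ^ (-α) * deriv f s)) := by
    have hcont := intervalIntegral.continuousOn_primitive_interval'
      (intervalIntegrable_sub_rpow_neg_mul_deriv hα1 ht hf hfi) left_mem_uIcc t right_mem_uIcc
    rw [uIcc_of_le ht.le] at hcont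
    exact hcont.mono_left (nhdsWithin_le_of_mem (Icc_mem_nhdsLT ht))
  have hboundary : Tendsto (fun b ↦ (t - b) ^ (-α) * (f b - f t)) (𝓝[<] t) (𝓝 0) :=
    tendsto_sub_rpow_neg_mul_sub hα1 <|
      (hdiff t (right_mem_Ioc.2 ht)).mono_of_mem_nhdsWithin (Ioc_mem_nhdsLT ht)
  have hle : ∫ s in (0 : ℝ)..t, (t - s) ^ (-α) * deriv f s ≤ 0 - t ^ (-α) * (f 0 - f t) :=
    le_of_tendsto_of_tendsto hintegral (hboundary.sub_const _)
      (by filter_upwards [Ioo_mem_nhdsLT ht] with b hb using hbound b hb)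
  have hΓ : 0 < 1 / Real.Gamma (1 - α) :=
    one_div_pos.2 (Real.Gamma_pos_of_pos (sub_pos.2 hα1))
  calc caputo α f t ≤ 1 / Real.Gamma (1 - α) * (0 - t ^ (-α) * (f 0 - f t)) :=
        mul_le_mul_of_nonneg_left hle hΓ.le
    _ = t ^ (-α) / Real.Gamma (1 - α) * (f t - f 0) := by ring

end CaputoMinimum

section ParabolicBoundary

variable {E : Type*} [TopologicalSpace E] {G : Set E} {T : ℝ}

/-- The parabolic boundary `S_G^T = (Ḡ × {0}) ∪ (∂G × [0, T])` of the cylinder `G × (0, T)`. -/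
def parabolicBoundary (G : Set E) (T : ℝ) : Set (E × ℝ) :=
  (closure G ×ˢ {0}) ∪ (frontier G ×ˢ Icc 0 T)

theorem parabolicBoundary_mono {t : ℝ} (htT : t ≤ T) :
    parabolicBoundary G t ⊆ parabolicBoundary G T :=
  union_subset_union_right _ (prod_mono_right (Icc_subset_Icc_right htT))

theorem parabolicBoundary_subset (hT : 0 ≤ T) :
    parabolicBoundary G T ⊆ closure G ×ˢ Icc 0 T :=
  union_subset (prod_mono_right (singleton_subset_iff.2 (left_mem_Icc.2 hT)))
    (prod_mono_left frontier_subset_closure)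

theorem mem_interior_prod_Ioc_of_notMem_parabolicBoundary {z : E × ℝ}
    (hz : z ∈ closure G ×ˢ Icc 0 T) (hzS : z ∉ parabolicBoundary G T) :
    z ∈ interior G ×ˢ Ioc 0 T := by
  obtain ⟨hx, ht⟩ := hz
  refine ⟨?_, ht.1.lt_of_ne' fun h0 ↦ hzS (Or.inl ⟨hx, h0⟩), ht.2⟩
  by_contra hint
  exact hzS (Or.inr ⟨⟨hx, hint⟩, ht⟩)

theorem exists_isMinOn_interior_prod_Ioc {β : Type*} [LinearOrder β] [TopologicalSpace β]
    [ClosedIicTopology β] {v : E × ℝ → β} {m : β} (hG : IsCompact (closure G))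
    (hv : ContinuousOn v (closure G ×ˢ Icc 0 T)) (hm : ∀ z ∈ parabolicBoundary G T, m ≤ v z)
    (hlt : ∃ z ∈ closure G ×ˢ Icc 0 T, v z < m) :
    ∃ z ∈ interior G ×ˢ Ioc 0 T, v z < m ∧ IsMinOn v (closure G ×ˢ Icc 0 T) z := by
  obtain ⟨z₀, hz₀, hz₀m⟩ := hlt
  obtain ⟨z, hz, hmin⟩ := (hG.prod isCompact_Icc).exists_isMinOn ⟨z₀, hz₀⟩ hv
  have hzm : v z < m := (hmin hz₀).trans_lt hz₀m
  exact ⟨z, mem_interior_prod_Ioc_of_notMem_parabolicBoundary hz fun hzS ↦ (hm z hzS).not_gt hzm,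
    hzm, hmin⟩

end ParabolicBoundary

section Solutions

variable {n : ℕ} {α T : ℝ} {G : Set (Fin n → ℝ)} {p q : (Fin n → ℝ) → ℝ}
  {F u : (Fin n → ℝ) → ℝ → ℝ}

theorem IsSolutionTFDE.initial_le_of_isMinOn (hu : IsSolutionTFDE n α T G p q F u)
    (hα : 0 ≤ α) (hα1 : α < 1) (hG : IsOpen G) {x : Fin n → ℝ} (hx : x ∈ G) {t : ℝ}
    (ht : t ∈ Ioo 0 T) (hp : DifferentiableAt ℝ p x) (hp0 : 0 ≤ p x) (hq0 : 0 ≤ q x)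
    (hF0 : 0 ≤ F x t) (hmin : IsMinOn (Function.uncurry u) (closure G ×ˢ Icc 0 t) (x, t))
    (hneg : u x t ≤ 0) : u x 0 ≤ u x t := by
  obtain ⟨hcont, hspace, htime, heq⟩ := hu
  have hxG : x ∈ closure G := subset_closure hx
  have hsub : uIcc 0 t ⊆ uIcc 0 T :=
    uIcc_subset_uIcc_left (mem_uIcc_of_le ht.1.le ht.2.le)
  have hcaputo : caputo α (u x) t ≤ t ^ (-α) / Real.Gamma (1 - α) * (u x t - u x 0) := by
    refine caputo_le_of_isMinOn hα hα1 ht.1 ?_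
      ((htime x hx).1.mono (Ioc_subset_Ioc_right ht.2.le)) ((htime x hx).2.mono_set hsub)
      fun s hs ↦ hmin (show (x, s) ∈ closure G ×ˢ Icc 0 t from ⟨hxG, hs⟩)
    exact hcont.comp (f := fun s : ℝ ↦ (x, s)) (by fun_prop)
      fun s hs ↦ ⟨hxG, hs.1, hs.2.trans ht.2.le⟩
  have hdiv : 0 ≤ divPGrad n p (fun y ↦ u y t) x := by
    refine divPGrad_nonneg_of_isLocalMin hp hp0 ((hspace t ht).contDiffAt (hG.mem_nhds hx)) ?_
    filter_upwards [hG.mem_nhds hx] with y hy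
    exact hmin (show (y, t) ∈ closure G ×ˢ Icc 0 t from ⟨subset_closure hy, ht.1.le, le_rfl⟩)
  have hqu : q x * u x t ≤ 0 := mul_nonpos_of_nonneg_of_nonpos hq0 hneg
  have hcaputo_nonneg : 0 ≤ caputo α (u x) t := by linarith [heq x hx t ht]
  have hcoeff : 0 < t ^ (-α) / Real.Gamma (1 - α) :=
    div_pos (Real.rpow_pos_of_pos ht.1 _) (Real.Gamma_pos_of_pos (sub_pos.2 hα1))
  exact sub_nonneg.1 (nonneg_of_mul_nonneg_right (hcaputo_nonneg.trans hcaputo) hcoeff)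

theorem IsSolutionTFDE.le_of_le_parabolicBoundary (hu : IsSolutionTFDE n α T G p q F u)
    (hα : 0 ≤ α) (hα1 : α < 1) (hT : 0 < T) (hG : IsOpen G) (hGb : Bornology.IsBounded G)
    (hp : DifferentiableOn ℝ p G) (hp0 : ∀ x ∈ G, 0 ≤ p x) (hq0 : ∀ x ∈ G, 0 ≤ q x)
    (hF0 : ∀ x ∈ G, ∀ t ∈ Ioo 0 T, 0 ≤ F x t) {m : ℝ} (hm0 : m ≤ 0)
    (hm : ∀ z ∈ parabolicBoundary G T, m ≤ Function.uncurry u z) {x : Fin n → ℝ}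
    (hx : x ∈ closure G) {t : ℝ} (ht : t ∈ Icc 0 T) : m ≤ u x t := by
  have hbefore : ∀ s ∈ Ico 0 T, m ≤ u x s := by
    intro s hs
    have hsub : closure G ×ˢ Icc 0 s ⊆ closure G ×ˢ Icc 0 T :=
      prod_mono_right (Icc_subset_Icc_right hs.2.le)
    by_contra! hlt
    obtain ⟨⟨x₁, t₁⟩, ⟨hx₁, ht₁⟩, hlt₁, hmin⟩ := exists_isMinOn_interior_prod_Ioc
      hGb.isCompact_closure (hu.1.mono hsub)
      (fun z hz ↦ hm z (parabolicBoundary_mono hs.2.le hz)) ⟨(x, s), ⟨hx, hs.1, le_rfl⟩, hlt⟩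
    replace hx₁ : x₁ ∈ G := interior_subset hx₁
    have ht₁T : t₁ ∈ Ioo 0 T := ⟨ht₁.1, ht₁.2.trans_lt hs.2⟩
    have hinit : u x₁ 0 ≤ u x₁ t₁ :=
      hu.initial_le_of_isMinOn hα hα1 hG hx₁ ht₁T (hp.differentiableAt (hG.mem_nhds hx₁))
        (hp0 x₁ hx₁) (hq0 x₁ hx₁) (hF0 x₁ hx₁ t₁ ht₁T)
        (hmin.on_subset (prod_mono_right (Icc_subset_Icc_right ht₁.2))) (hlt₁.le.trans hm0)
    have hm_le : m ≤ u x₁ 0 := hm (x₁, 0) (Or.inl ⟨subset_closure hx₁, rfl⟩)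
    exact (hm_le.trans hinit).not_gt hlt₁
  have hcont : ContinuousOn (u x) (Icc 0 T) :=
    hu.1.comp (f := fun s : ℝ ↦ (x, s)) (by fun_prop) fun s hs ↦ ⟨hx, hs⟩
  rw [← closure_Ico hT.ne] at hcont ht
  exact le_on_closure hbefore continuousOn_const hcont ht

theorem minimum_principle_TFDE_general (hu : IsSolutionTFDE n α T G p q F u)
    (hα : 0 ≤ α) (hα1 : α < 1) (hT : 0 < T) (hG : IsOpen G) (hGb : Bornology.IsBounded G)
    (hp : DifferentiableOn ℝ p G) (hp0 : ∀ x ∈ G, 0 ≤ p x) (hq0 : ∀ x ∈ G, 0 ≤ q x)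
    (hF0 : ∀ x ∈ G, ∀ t ∈ Ioo 0 T, 0 ≤ F x t) :
    ∀ x ∈ closure G, ∀ t ∈ Icc 0 T,
      min 0 (sInf (Function.uncurry u '' parabolicBoundary G T)) ≤ u x t := by
  have hbdd : BddBelow (Function.uncurry u '' parabolicBoundary G T) :=
    ((hGb.isCompact_closure.prod isCompact_Icc).image_of_continuousOn hu.1).bddBelow.mono
      (image_mono (parabolicBoundary_subset hT.le))
  exact fun x hx t ht ↦ hu.le_of_le_parabolicBoundary hα hα1 hT hG hGb hp hp0 hq0 hF0
    (min_le_left _ _)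
    (fun z hz ↦ (min_le_right _ _).trans (csInf_le hbdd (mem_image_of_mem _ hz))) hx ht

end Solutions

/-- Minimum principle: if `u` solves the time-fractional diffusion
equation in `Ω_T = G×(0,T)` with `F ≥ 0` in `Ω_T`, then for every
`(x,t) ∈ Ḡ×[0,T]`, `u(x,t) ≥ min{0, inf_{S_G^T} u}` where
`S_G^T = (Ḡ×{0}) ∪ (S×[0,T])` is the parabolic boundary. -/
theorem minimum_principle_TFDE (n : ℕ) (α T : ℝ) (hα : 0 < α) (hα1 : α < 1) (hT : 0 < T)
    (G : Set (Fin n → ℝ)) (hG : IsOpen G) (hGb : Bornology.IsBounded G)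
    (p q : (Fin n → ℝ) → ℝ)
    (hp : ContDiffOn ℝ 1 p (closure G)) (hppos : ∀ x ∈ closure G, 0 < p x)
    (hq : ContinuousOn q (closure G)) (hqnn : ∀ x ∈ closure G, 0 ≤ q x)
    (F : (Fin n → ℝ) → ℝ → ℝ)
    (hF : ContinuousOn (fun z : (Fin n → ℝ) × ℝ => F z.1 z.2) (G ×ˢ Set.Ioo 0 T))
    (u : (Fin n → ℝ) → ℝ → ℝ)
    (hu : IsSolutionTFDE n α T G p q F u)
    (hFpos : ∀ x ∈ G, ∀ t ∈ Set.Ioo (0:ℝ) T, 0 ≤ F x t) :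
    ∀ x ∈ closure G, ∀ t ∈ Set.Icc (0:ℝ) T,
      u x t ≥ min 0 (sInf ((fun z : (Fin n → ℝ) × ℝ => u z.1 z.2) ''
        ((closure G ×ˢ ({0} : Set ℝ)) ∪ (frontier G ×ˢ Set.Icc 0 T)))) :=
  minimum_principle_TFDE_general hu hα.le hα1 hT hG hGb
    ((hp.differentiableOn one_ne_zero).mono subset_closure)
    (fun x hx ↦ (hppos x (subset_closure hx)).le) (fun x hx ↦ hqnn x (subset_closure hx)) hFpos
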